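/- arXiv:2404.07276 — 2 statements merged into one kernel-verified Lean document; each statement's English description precedes it below -/
import Mathlib

section
/- (Convolution estimate.) Let d ≥ 1 and 0 < α < 1. There exists a constant C₁ = C₁(d, α) < ∞ such that for every real R ≥ 1 and every x ∈ ℤ^d with ‖x‖ ≥ R: Σ_{a∈ℤ^d, ‖a‖ ≤ ‖x‖/4} Σ_{b∈ℤ^d, ‖b−x‖ ≤ ‖x‖/4} ⟨a⟩^{−d−α} ⟨a−b⟩^{−d−α} ⟨b−x⟩^{−d−α} min{1, ⟨a⟩/R} min{1, ⟨x−b⟩/R} ≤ C₁ R^{−2α} ⟨x⟩^{−d−α}. -/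
open MeasureTheory ENNReal

namespace LRP

/-- The vertex set `ℤ^d`. -/
abbrev V (d : ℕ) : Type := Fin d → ℤ

/-- The `ℓ^∞` norm of a lattice point, as a natural number. -/
def normInf {d : ℕ} (x : V d) : ℕ := Finset.univ.sup fun i => (x i).natAbs

/-- A percolation configuration: each (unordered) pair of vertices is open or closed. -/
abbrev Config (d : ℕ) : Type := Sym2 (V d) → Bool

/-- The probability `1 - exp (-β J(x,y))` that the edge `e = {x,y}` is open
(the symmetrization `(J x y + J y x)/2` equals `J x y` for symmetric `J`). -/
noncomputable def edgeProb {d : ℕ} (J : V d → V d → ℝ) (β : ℝ) (e : Sym2 (V d)) : ℝ≥0∞ :=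
  ENNReal.ofReal (1 - Real.exp (-β *
    Sym2.lift ⟨fun x y => (J x y + J y x) / 2, fun x y => by dsimp only; rw [add_comm]⟩ e))

/-- `IsLRP J P` asserts that for each `β`, `P β` is the law of long-range percolation on `ℤ^d`
with kernel `J` at inverse temperature `β`: distinct edges are open independently, edge `{x,y}`
being open with probability `1 - exp (-β J(x,y))`.  This is expressed by prescribing the
probability of every finite cylinder event, which characterizes the measure uniquely. -/
def IsLRP {d : ℕ} (J : V d → V d → ℝ) (P : ℝ → Measure (Config d)) : Prop :=
  ∀ (β : ℝ) (s : Finset (Sym2 (V d))) (f : Sym2 (V d) → Bool),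
    P β {ω | ∀ e ∈ s, ω e = f e} =
      ∏ e ∈ s, (if f e then edgeProb J β e else 1 - edgeProb J β e)

/-- Two vertices are adjacent if they are distinct and the edge between them is open. -/
def adj {d : ℕ} (ω : Config d) (x y : V d) : Prop := x ≠ y ∧ ω s(x, y) = true

/-- `x ↔ y`: the vertices are connected by a path of open edges. -/
def conn {d : ℕ} (ω : Config d) (x y : V d) : Prop := Relation.ReflTransGen (adj ω) x y

/-- `x ↔ y` inside `A`: connected by an open path all of whose vertices lie in `A`. -/
def connIn {d : ℕ} (ω : Config d) (A : Set (V d)) (x y : V d) : Prop :=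
  x ∈ A ∧ y ∈ A ∧ Relation.ReflTransGen (fun a b => a ∈ A ∧ b ∈ A ∧ adj ω a b) x y

/-- The cluster of `x`. -/
def cluster {d : ℕ} (ω : Config d) (x : V d) : Set (V d) := {y | conn ω x y}

/-- The critical point `β_c`. -/
noncomputable def betaC {d : ℕ} (P : ℝ → Measure (Config d)) : ℝ :=
  sInf {β : ℝ | 0 ≤ β ∧ 0 < P β {ω | ∃ x, (cluster ω x).Infinite}}

/-- The two-point function `ℙ_β(x ↔ y)`. -/
noncomputable def twoPoint {d : ℕ} (P : ℝ → Measure (Config d)) (β : ℝ) (x y : V d) : ℝ≥0∞ :=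
  P β {ω | conn ω x y}

/-- The susceptibility `χ(β) = Σ_x ℙ_β(0 ↔ x)`. -/
noncomputable def chi {d : ℕ} (P : ℝ → Measure (Config d)) (β : ℝ) : ℝ≥0∞ :=
  ∑' x : V d, twoPoint P β 0 x

/-- `Σ_{x ∈ [-n,n]^d} ℙ_β(0 ↔ x)`. -/
noncomputable def boxSum {d : ℕ} (P : ℝ → Measure (Config d)) (β : ℝ) (n : ℕ) : ℝ≥0∞ :=
  ∑' x : V d, if normInf x ≤ n then twoPoint P β 0 x else 0

/-- The correlation length `ξ(β) = inf {r ≥ 1 : Σ_{x ∈ [-r,r]^d} ℙ_β(0↔x) ≥ χ(β)/2}`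
(`= ∞` if no such `r` exists). -/
noncomputable def xi {d : ℕ} (P : ℝ → Measure (Config d)) (β : ℝ) : ℝ≥0∞ :=
  sInf {r : ℝ≥0∞ | ∃ n : ℕ, r = (n : ℝ≥0∞) ∧ 1 ≤ n ∧ chi P β ≤ 2 * boxSum P β n}

/-- The triangle diagram `∇_β`. -/
noncomputable def triangle {d : ℕ} (P : ℝ → Measure (Config d)) (β : ℝ) : ℝ≥0∞ :=
  ∑' x : V d, ∑' y : V d, twoPoint P β 0 x * twoPoint P β x y * twoPoint P β y 0

/-- The standing assumptions on the kernel `J`: symmetric, integrable, translation-invariant,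
with `c ‖x-y‖^{-d-α} ≤ J(x,y) ≤ C ‖x-y‖^{-d-α}` for distinct `x, y`, where `0 < α < d`. -/
structure KernelHyp (d : ℕ) (J : V d → V d → ℝ) (α c C : ℝ) : Prop where
  d_pos : 1 ≤ d
  symm : ∀ x y, J x y = J y x
  transInv : ∀ x y z : V d, J (x + z) (y + z) = J x y
  nonneg : ∀ x y, 0 ≤ J x y
  integrable : Summable fun x : V d => J 0 x
  alpha_pos : 0 < α
  alpha_lt_d : α < (d : ℝ)
  c_pos : 0 < c
  c_le_C : c ≤ C
  lower : ∀ x y : V d, x ≠ y → c * (normInf (x - y) : ℝ) ^ (-(d : ℝ) - α) ≤ J x y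
  upper : ∀ x y : V d, x ≠ y → J x y ≤ C * (normInf (x - y) : ℝ) ^ (-(d : ℝ) - α)

/-! Since `‖a‖` and `‖b - x‖` are both at most `‖x‖ / 4`, the middle factor `⟨a - b⟩ ^ (-d - α)`
is at most `2 ^ (d + α) ⟨x⟩ ^ (-d - α)`. What remains splits into the product of two copies of
`∑ a, ⟨a⟩ ^ (-d - α) min {1, ⟨a⟩ / R}`, each of order `R ^ (-α)`. Indeed the dyadic shell
`2 ^ k ≤ ⟨a⟩ < 2 ^ (k + 1)` has `O(2 ^ (k d))` points, so with `t = 2 ^ k` it contributes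
`O(t ^ (-α) min {1, t / R})`. Because `0 < α < 1`, this decays geometrically as `t` moves away from
`R` in either direction, and the shell at scale `R` dominates. -/

/-- Polynomial volume growth of degree `D` of the sublevel sets of `w`: each `{a | w a ≤ r}` has at
most `A * r ^ D` points. Quantifying over finite subsets makes finiteness of the sublevel sets
part of the notion. -/
def PolynomialGrowth {β : Type*} (w : β → ℝ) (A D : ℝ) : Prop :=
  ∀ r, 0 < r → ∀ s : Finset β, (∀ a ∈ s, w a ≤ r) → (s.card : ℝ) ≤ A * r ^ D

section DyadicSums

variable {β : Type*} {w : β → ℝ} {A D : ℝ}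

theorem sum_rpow_neg_le_of_mem_dyadic_shell (hD : 0 ≤ D) (hgrowth : PolynomialGrowth w A D)
    {r : ℝ} (hr : 0 < r) {s : Finset β} (hs : ∀ a ∈ s, r ≤ w a ∧ w a ≤ 2 * r) :
    ∑ a ∈ s, w a ^ (-D) ≤ A * 2 ^ D :=
  calc ∑ a ∈ s, w a ^ (-D) ≤ ∑ _a ∈ s, r ^ (-D) := Finset.sum_le_sum fun a ha =>
        Real.rpow_le_rpow_of_nonpos hr (hs a ha).1 (neg_nonpos.2 hD)
    _ = s.card * r ^ (-D) := by rw [Finset.sum_const, nsmul_eq_mul]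
    _ ≤ A * (2 * r) ^ D * r ^ (-D) := by
        gcongr
        exact hgrowth _ (by positivity) s fun a ha => (hs a ha).2
    _ = A * 2 ^ D := by
        rw [Real.mul_rpow zero_le_two hr.le, Real.rpow_neg hr.le]
        field_simp

theorem sum_rpow_neg_mul_floor_logb_le (hw : ∀ a, 0 < w a) (hD : 0 ≤ D)
    (hgrowth : PolynomialGrowth w A D) {g : ℤ → ℝ} (hg0 : ∀ k, 0 ≤ g k) (hg : Summable g)
    (s : Finset β) :
    ∑ a ∈ s, w a ^ (-D) * g ⌊Real.logb 2 (w a)⌋ ≤ A * 2 ^ D * ∑' k, g k := by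
  have hA : 0 ≤ A := by simpa using hgrowth 1 one_pos ∅ (by simp)
  let scale (a : β) : ℤ := ⌊Real.logb 2 (w a)⌋
  have mem_shell (a : β) : (2 : ℝ) ^ (scale a : ℝ) ≤ w a ∧ w a ≤ 2 * 2 ^ (scale a : ℝ) := by
    rw [mul_comm, ← Real.rpow_add_one two_ne_zero]
    exact ⟨(Real.le_logb_iff_rpow_le one_lt_two (hw a)).1 (Int.floor_le _),
      (Real.logb_le_iff_le_rpow one_lt_two (hw a)).1 (Int.lt_floor_add_one _).le⟩
  have shell_sum_le (k : ℤ) :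
      ∑ a ∈ s with scale a = k, w a ^ (-D) * g (scale a) ≤ A * 2 ^ D * g k := by
    calc ∑ a ∈ s with scale a = k, w a ^ (-D) * g (scale a)
      _ = (∑ a ∈ s with scale a = k, w a ^ (-D)) * g k := by
          rw [Finset.sum_mul]
          exact Finset.sum_congr rfl fun a ha => by rw [(Finset.mem_filter.1 ha).2]
      _ ≤ A * 2 ^ D * g k := by
          refine mul_le_mul_of_nonneg_right ?_ (hg0 k)
          refine sum_rpow_neg_le_of_mem_dyadic_shell hD hgrowth (r := 2 ^ (k : ℝ)) (by positivity)
            fun a ha => ?_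
          rw [← (Finset.mem_filter.1 ha).2]
          exact mem_shell a
  calc ∑ a ∈ s, w a ^ (-D) * g (scale a)
    _ = ∑ k ∈ s.image scale, ∑ a ∈ s with scale a = k, w a ^ (-D) * g (scale a) :=
        (Finset.sum_fiberwise_of_maps_to (fun _ ha => Finset.mem_image_of_mem _ ha) _).symm
    _ ≤ ∑ k ∈ s.image scale, A * 2 ^ D * g k := Finset.sum_le_sum fun k _ => shell_sum_le k
    _ = A * 2 ^ D * ∑ k ∈ s.image scale, g k := (Finset.mul_sum ..).symm
    _ ≤ A * 2 ^ D * ∑' k, g k := by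
        gcongr
        exact hg.sum_le_tsum _ fun k _ => hg0 k

theorem summable_rpow_neg_mul_abs_intCast {b ε : ℝ} (hb : 1 < b) (hε : 0 < ε) :
    Summable fun j : ℤ => b ^ (-ε * |(j : ℝ)|) := by
  have hb0 : 0 < b := one_pos.trans hb
  have geometric : Summable fun n : ℕ => b ^ (-ε * n) := by
    simp_rw [Real.rpow_mul_natCast hb0.le]
    exact summable_geometric_of_lt_one (by positivity)
      (Real.rpow_lt_one_of_one_lt_of_neg hb (neg_neg_of_pos hε))
  exact .of_nat_of_neg (by simpa using geometric) (by simpa using geometric)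

theorem abs_floor_sub_floor_le {K : Type*} [CommRing K] [LinearOrder K] [IsStrictOrderedRing K]
    [FloorRing K] (x y : K) : |(⌊x⌋ : K) - ⌊y⌋| ≤ |x - y| + 1 := by
  have := Int.floor_le x
  have := Int.lt_floor_add_one x
  have := Int.floor_le y
  have := Int.lt_floor_add_one y
  have := le_abs_self (x - y)
  have := neg_abs_le (x - y)
  exact abs_le.2 ⟨by linarith, by linarith⟩

theorem rpow_neg_mul_min_one_le {u α ε : ℝ} (hu : 0 < u) (hεα : ε ≤ α) (hε1 : ε ≤ 1 - α) :
    u ^ (-α) * min 1 u ≤ 2 ^ (-ε * |Real.logb 2 u|) := by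
  obtain ⟨y, rfl⟩ : ∃ y : ℝ, 2 ^ y = u :=
    ⟨Real.logb 2 u, Real.rpow_logb two_pos (by norm_num) hu⟩
  rw [Real.logb_rpow two_pos (by norm_num)]
  rcases le_total 0 y with hy | hy
  · calc ((2 : ℝ) ^ y) ^ (-α) * min 1 (2 ^ y) ≤ (2 ^ y) ^ (-α) * 1 := by
          gcongr; exact min_le_left _ _
      _ = 2 ^ (y * -α) := by rw [mul_one, ← Real.rpow_mul zero_le_two]
      _ ≤ 2 ^ (-ε * |y|) := by
          rw [abs_of_nonneg hy]
          exact Real.rpow_le_rpow_of_exponent_le one_le_two (by nlinarith)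
  · calc ((2 : ℝ) ^ y) ^ (-α) * min 1 (2 ^ y) ≤ (2 ^ y) ^ (-α) * 2 ^ y := by
          gcongr; exact min_le_right _ _
      _ = 2 ^ (y * -α + y) := by rw [← Real.rpow_mul zero_le_two, ← Real.rpow_add two_pos]
      _ ≤ 2 ^ (-ε * |y|) := by
          rw [abs_of_nonpos hy]
          exact Real.rpow_le_rpow_of_exponent_le one_le_two (by nlinarith)

theorem rpow_neg_mul_min_one_div_le {t R α ε : ℝ} (ht : 0 < t) (hR : 0 < R) (hε0 : 0 ≤ ε)
    (hεα : ε ≤ α) (hε1 : ε ≤ 1 - α) :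
    t ^ (-α) * min 1 (t / R) ≤
      R ^ (-α) * 2 ^ ε * 2 ^ (-ε * |(⌊Real.logb 2 t⌋ : ℝ) - ⌊Real.logb 2 R⌋|) := by
  have scale_gap := abs_floor_sub_floor_le (Real.logb 2 t) (Real.logb 2 R)
  calc t ^ (-α) * min 1 (t / R) = R ^ (-α) * ((t / R) ^ (-α) * min 1 (t / R)) := by
        rw [Real.div_rpow ht.le hR.le]
        field_simp
    _ ≤ R ^ (-α) * 2 ^ (-ε * |Real.logb 2 (t / R)|) := by
        gcongr; exact rpow_neg_mul_min_one_le (div_pos ht hR) hεα hε1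
    _ ≤ R ^ (-α) * 2 ^ (ε + -ε * |(⌊Real.logb 2 t⌋ : ℝ) - ⌊Real.logb 2 R⌋|) := by
        rw [Real.logb_div ht.ne' hR.ne']
        gcongr
        · exact one_le_two
        · nlinarith
    _ = _ := by rw [Real.rpow_add two_pos, mul_assoc]

theorem sum_rpow_mul_min_one_div_le (hw : ∀ a, 0 < w a) (hD : 0 ≤ D)
    (hgrowth : PolynomialGrowth w A D) {R α ε : ℝ} (hR : 0 < R) (hε0 : 0 < ε) (hεα : ε ≤ α)
    (hε1 : ε ≤ 1 - α) (s : Finset β) :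
    ∑ a ∈ s, w a ^ (-D - α) * min 1 (w a / R) ≤
      A * 2 ^ D * 2 ^ ε * (∑' j : ℤ, (2 : ℝ) ^ (-ε * |(j : ℝ)|)) * R ^ (-α) := by
  let decay (j : ℤ) : ℝ := 2 ^ (-ε * |(j : ℝ)|)
  let recenter : ℤ ≃ ℤ := Equiv.subRight ⌊Real.logb 2 R⌋
  let shellBound (k : ℤ) : ℝ := R ^ (-α) * 2 ^ ε * decay (recenter k)
  have summable_shellBound : Summable shellBound :=
    (recenter.summable_iff.2 (summable_rpow_neg_mul_abs_intCast one_lt_two hε0)).mul_left _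
  have tsum_shellBound : ∑' k, shellBound k = R ^ (-α) * 2 ^ ε * ∑' j, decay j := by
    rw [tsum_mul_left, recenter.tsum_eq]
  have term_le (a : β) :
      w a ^ (-D - α) * min 1 (w a / R) ≤ w a ^ (-D) * shellBound ⌊Real.logb 2 (w a)⌋ := by
    have := hw a
    rw [sub_eq_add_neg, Real.rpow_add (hw a), mul_assoc]
    gcongr
    simpa [shellBound, decay, recenter] using
      rpow_neg_mul_min_one_div_le (hw a) hR hε0.le hεα hε1
  calc ∑ a ∈ s, w a ^ (-D - α) * min 1 (w a / R)
    _ ≤ ∑ a ∈ s, w a ^ (-D) * shellBound ⌊Real.logb 2 (w a)⌋ :=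
        Finset.sum_le_sum fun a _ => term_le a
    _ ≤ A * 2 ^ D * ∑' k, shellBound k :=
        sum_rpow_neg_mul_floor_logb_le hw hD hgrowth (fun k => by positivity)
          summable_shellBound s
    _ = A * 2 ^ D * 2 ^ ε * (∑' j, decay j) * R ^ (-α) := by rw [tsum_shellBound]; ring

theorem exists_tsum_rpow_mul_min_one_div_le (hw : ∀ a, 0 < w a) (hA : 0 < A) (hD : 0 ≤ D)
    (hgrowth : PolynomialGrowth w A D) {α : ℝ} (hα0 : 0 < α) (hα1 : α < 1) :
    ∃ C : ℝ, 0 < C ∧ ∀ R : ℝ, 0 < R →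
      (Summable fun a => w a ^ (-D - α) * min 1 (w a / R)) ∧
        ∑' a, w a ^ (-D - α) * min 1 (w a / R) ≤ C * R ^ (-α) := by
  have hε0 : 0 < min α (1 - α) := lt_min hα0 (sub_pos.2 hα1)
  have decay_pos : 0 < ∑' j : ℤ, (2 : ℝ) ^ (-min α (1 - α) * |(j : ℝ)|) :=
    (summable_rpow_neg_mul_abs_intCast one_lt_two hε0).tsum_pos (fun j => by positivity) 0
      (by positivity)
  refine ⟨A * 2 ^ D * 2 ^ min α (1 - α) * ∑' j : ℤ, (2 : ℝ) ^ (-min α (1 - α) * |(j : ℝ)|),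
    by positivity, fun R hR => ?_⟩
  have term_nonneg : 0 ≤ fun a => w a ^ (-D - α) * min 1 (w a / R) := fun a => by
    have := hw a
    positivity
  have sum_le := sum_rpow_mul_min_one_div_le hw hD hgrowth hR hε0 (min_le_left _ _)
    (min_le_right _ _)
  exact ⟨summable_of_sum_le term_nonneg sum_le, Real.tsum_le_of_sum_le term_nonneg sum_le⟩

end DyadicSums

theorem tsum_tsum_le_of_le_mul {β γ : Type*} {f : β → γ → ℝ} {F : β → ℝ} {G : γ → ℝ} {c : ℝ}
    (hF : Summable F) (hG : Summable G) (hf0 : ∀ a b, 0 ≤ f a b)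
    (hf : ∀ a b, f a b ≤ c * (F a * G b)) :
    ∑' a, ∑' b, f a b ≤ c * ((∑' a, F a) * ∑' b, G b) := by
  have inner_le (a : β) : ∑' b, f a b ≤ c * (F a * ∑' b, G b) := by
    have hmajorant : Summable fun b => c * (F a * G b) := (hG.mul_left _).mul_left _
    rw [← tsum_mul_left, ← tsum_mul_left]
    exact (hmajorant.of_nonneg_of_le (hf0 a) (hf a)).tsum_le_tsum (hf a) hmajorant
  have hmajorant : Summable fun a => c * (F a * ∑' b, G b) := (hF.mul_right _).mul_left _
  rw [← tsum_mul_right, ← tsum_mul_left]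
  exact (hmajorant.of_nonneg_of_le (fun a => tsum_nonneg (hf0 a)) inner_le).tsum_le_tsum
    inner_le hmajorant

theorem card_le_of_forall_norm_le {ι : Type*} [Fintype ι] {s : Finset (ι → ℤ)} {n : ℕ}
    (hs : ∀ a ∈ s, ‖a‖ ≤ n) : s.card ≤ (2 * n + 1) ^ Fintype.card ι := by
  classical
  have subset_box : s ⊆ Fintype.piFinset fun _ => Finset.Icc (-(n : ℤ)) n := fun a ha => by
    refine Fintype.mem_piFinset.2 fun i => Finset.mem_Icc.2 (abs_le.1 ?_)
    have hi : ‖a i‖ ≤ n := (norm_le_pi_norm a i).trans (hs a ha)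
    rw [Int.norm_eq_abs] at hi
    exact_mod_cast hi
  calc s.card ≤ (Fintype.piFinset fun _ : ι => Finset.Icc (-(n : ℤ)) n).card :=
        Finset.card_le_card subset_box
    _ = (2 * n + 1) ^ Fintype.card ι := by
        rw [Fintype.card_piFinset, Finset.prod_const, Finset.card_univ, Int.card_Icc]
        congr 1
        omega

section Lattice

variable {d : ℕ}

theorem natCast_normInf (x : V d) : (normInf x : ℝ) = ‖x‖ := by
  rw [normInf, Pi.norm_def, ← NNReal.coe_natCast, NNReal.coe_inj,
    Finset.apply_sup_eq_sup_comp (Nat.cast : ℕ → NNReal) Nat.cast_max Nat.cast_zero]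
  simp only [Function.comp_def, NNReal.natCast_natAbs]

/-- The bracket `⟨x⟩ = max {2, ‖x‖}` of a lattice point, a norm kept away from `0` so that its
negative powers are bounded. -/
noncomputable def bracket (x : V d) : ℝ := max 2 (normInf x : ℝ)

/-- The kernel `⟨a⟩ ^ (-d - α) min {1, ⟨a⟩ / R}`, which collects the factors of the convolution
depending on one summation variable only. -/
noncomputable def cutoffKernel (α R : ℝ) (a : V d) : ℝ :=
  bracket a ^ (-(d : ℝ) - α) * min 1 (bracket a / R)

/-- The summand of the convolution at `(a, b)`, extended by `0` outside the region
`‖a‖, ‖b - x‖ ≤ ‖x‖ / 4`. -/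
noncomputable def convolutionTerm (α R : ℝ) (x a b : V d) : ℝ :=
  if (normInf a : ℝ) ≤ normInf x / 4 ∧ (normInf (b - x) : ℝ) ≤ normInf x / 4 then
    bracket a ^ (-(d : ℝ) - α) * bracket (a - b) ^ (-(d : ℝ) - α) *
      bracket (b - x) ^ (-(d : ℝ) - α) * min 1 (bracket a / R) * min 1 (bracket (x - b) / R)
  else 0

theorem two_le_bracket (x : V d) : 2 ≤ bracket x := le_max_left _ _

theorem bracket_pos (x : V d) : 0 < bracket x := two_pos.trans_le (two_le_bracket x)

theorem bracket_sub_comm (x y : V d) : bracket (x - y) = bracket (y - x) := by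
  simp only [bracket, natCast_normInf, norm_sub_rev]

theorem polynomialGrowth_bracket (d : ℕ) : PolynomialGrowth (bracket (d := d)) (3 ^ d) d := by
  intro r hr s hs
  rcases s.eq_empty_or_nonempty with rfl | ⟨a, ha⟩
  · simpa using by positivity
  have one_le_r : 1 ≤ r := one_le_two.trans ((two_le_bracket a).trans (hs a ha))
  have norm_le (b : V d) (hb : b ∈ s) : ‖b‖ ≤ ⌊r⌋₊ := by
    rw [← natCast_normInf]
    exact_mod_cast Nat.le_floor ((le_max_right _ _).trans (hs b hb))
  calc (s.card : ℝ) ≤ (2 * ⌊r⌋₊ + 1) ^ d := by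
        exact_mod_cast Fintype.card_fin d ▸ card_le_of_forall_norm_le norm_le
    _ ≤ (3 * r) ^ d := by
        gcongr
        linarith [Nat.floor_le hr.le]
    _ = 3 ^ d * r ^ (d : ℝ) := by rw [mul_pow, Real.rpow_natCast]

theorem cutoffKernel_nonneg {α R : ℝ} (hR : 0 < R) (a : V d) : 0 ≤ cutoffKernel α R a := by
  have := bracket_pos a
  unfold cutoffKernel
  positivity

theorem exists_tsum_cutoffKernel_le (d : ℕ) {α : ℝ} (hα0 : 0 < α) (hα1 : α < 1) :
    ∃ C : ℝ, 0 < C ∧ ∀ R : ℝ, 0 < R →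
      Summable (cutoffKernel (d := d) α R) ∧ ∑' a : V d, cutoffKernel α R a ≤ C * R ^ (-α) :=
  exists_tsum_rpow_mul_min_one_div_le bracket_pos (by positivity) d.cast_nonneg
    (polynomialGrowth_bracket d) hα0 hα1

theorem half_bracket_le_bracket_sub {a b x : V d}
    (h : (normInf a : ℝ) + normInf (b - x) ≤ normInf x / 2) : bracket x / 2 ≤ bracket (a - b) := by
  have triangle_ineq : ‖x‖ ≤ ‖a - b‖ + (‖a‖ + ‖b - x‖) :=
    calc ‖x‖ = ‖a - (a - b) - (b - x)‖ := by congr 1; abel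
      _ ≤ ‖a‖ + ‖a - b‖ + ‖b - x‖ := (norm_sub_le _ _).trans (by gcongr; exact norm_sub_le _ _)
      _ = ‖a - b‖ + (‖a‖ + ‖b - x‖) := by ring
  simp only [natCast_normInf] at h
  rw [div_le_iff₀ two_pos, bracket, natCast_normInf]
  refine max_le (by linarith [two_le_bracket (a - b)]) ?_
  have : ‖a - b‖ ≤ bracket (a - b) := natCast_normInf (a - b) ▸ le_max_right _ _
  linarith

theorem bracket_sub_rpow_neg_le {a b x : V d} {p : ℝ} (hp : 0 ≤ p)
    (h : (normInf a : ℝ) + normInf (b - x) ≤ normInf x / 2) :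
    bracket (a - b) ^ (-p) ≤ 2 ^ p * bracket x ^ (-p) := by
  have hx := bracket_pos x
  calc bracket (a - b) ^ (-p) ≤ (bracket x / 2) ^ (-p) :=
        Real.rpow_le_rpow_of_nonpos (by positivity) (half_bracket_le_bracket_sub h)
          (neg_nonpos.2 hp)
    _ = 2 ^ p * bracket x ^ (-p) := by
        rw [Real.div_rpow hx.le zero_le_two, Real.rpow_neg zero_le_two, div_inv_eq_mul, mul_comm]

theorem convolutionTerm_nonneg {α R : ℝ} (hR : 0 < R) (x a b : V d) :
    0 ≤ convolutionTerm α R x a b := by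
  have := bracket_pos a
  have := bracket_pos (a - b)
  have := bracket_pos (b - x)
  have := bracket_pos (x - b)
  unfold convolutionTerm
  positivity

theorem convolutionTerm_le {α R : ℝ} (hα : 0 ≤ α) (hR : 0 < R) (x a b : V d) :
    convolutionTerm α R x a b ≤ 2 ^ (d + α) * bracket x ^ (-(d : ℝ) - α) *
      (cutoffKernel α R a * cutoffKernel α R (b - x)) := by
  have kernels_nonneg : 0 ≤ cutoffKernel α R a * cutoffKernel α R (b - x) :=
    mul_nonneg (cutoffKernel_nonneg hR a) (cutoffKernel_nonneg hR (b - x))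
  have := bracket_pos x
  unfold convolutionTerm
  split_ifs with h
  · calc _ = bracket (a - b) ^ (-(d + α)) * (cutoffKernel α R a * cutoffKernel α R (b - x)) := by
          rw [cutoffKernel, cutoffKernel, bracket_sub_comm x b, ← neg_add']
          ring
      _ ≤ 2 ^ (d + α) * bracket x ^ (-(d + α)) *
            (cutoffKernel α R a * cutoffKernel α R (b - x)) := by
          gcongr
          exact bracket_sub_rpow_neg_le (by positivity) (by linarith [h.1, h.2])
      _ = _ := by rw [neg_add']
  · positivity

theorem tsum_convolutionTerm_le {α R : ℝ} (hα : 0 ≤ α) (hR : 0 < R)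
    (hkernel : Summable (cutoffKernel (d := d) α R)) (x : V d) :
    ∑' a, ∑' b, convolutionTerm α R x a b ≤
      2 ^ (d + α) * bracket x ^ (-(d : ℝ) - α) * (∑' a : V d, cutoffKernel α R a) ^ 2 := by
  have tsum_shift : ∑' b, cutoffKernel α R (b - x) = ∑' b : V d, cutoffKernel α R b :=
    (Equiv.subRight x).tsum_eq (cutoffKernel α R)
  rw [sq]
  nth_rw 2 [← tsum_shift]
  exact tsum_tsum_le_of_le_mul hkernel ((Equiv.subRight x).summable_iff.2 hkernel)
    (convolutionTerm_nonneg hR x) (convolutionTerm_le hα hR x)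

end Lattice

theorem convolution_estimate_general (d : ℕ) {α : ℝ} (hα0 : 0 < α) (hα1 : α < 1) :
    ∃ C₁ : ℝ, 0 < C₁ ∧ ∀ R : ℝ, 0 < R → ∀ x : V d,
      ∑' a, ∑' b, convolutionTerm α R x a b
        ≤ C₁ * R ^ (-(2 * α)) * bracket x ^ (-(d : ℝ) - α) := by
  obtain ⟨C, hC, hkernel⟩ := exists_tsum_cutoffKernel_le d hα0 hα1
  refine ⟨2 ^ (d + α) * C ^ 2, by positivity, fun R hR x => ?_⟩
  obtain ⟨hsummable, htsum⟩ := hkernel R hR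
  have tsum_kernel_nonneg : 0 ≤ ∑' a : V d, cutoffKernel α R a :=
    tsum_nonneg (cutoffKernel_nonneg hR)
  have := bracket_pos x
  calc ∑' a, ∑' b, convolutionTerm α R x a b
    _ ≤ 2 ^ (d + α) * bracket x ^ (-(d : ℝ) - α) * (∑' a : V d, cutoffKernel α R a) ^ 2 :=
        tsum_convolutionTerm_le hα0.le hR hsummable x
    _ ≤ 2 ^ (d + α) * bracket x ^ (-(d : ℝ) - α) * (C * R ^ (-α)) ^ 2 := by gcongr
    _ = 2 ^ (d + α) * C ^ 2 * R ^ (-(2 * α)) * bracket x ^ (-(d : ℝ) - α) := by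
        rw [mul_pow, ← Real.rpow_mul_natCast hR.le, Nat.cast_two, neg_mul, mul_comm α 2]
        ring

/-- Deterministic convolution estimate on the lattice: for `0 < α < 1`, `R ≥ 1` and
`‖x‖ ≥ R`, the double sum over `‖a‖ ≤ ‖x‖/4`, `‖b-x‖ ≤ ‖x‖/4` of
`⟨a⟩^{-d-α} ⟨a-b⟩^{-d-α} ⟨b-x⟩^{-d-α} min{1,⟨a⟩/R} min{1,⟨x-b⟩/R}` is at most
`C₁ R^{-2α} ⟨x⟩^{-d-α}`. -/
theorem convolution_estimate {d : ℕ} (hd : 1 ≤ d) {α : ℝ} (hα0 : 0 < α) (hα1 : α < 1) :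
    ∃ C₁ : ℝ, 0 < C₁ ∧ ∀ R : ℝ, 1 ≤ R → ∀ x : V d, R ≤ (normInf x : ℝ) →
      (∑' a : V d, ∑' b : V d,
        (if (normInf a : ℝ) ≤ (normInf x : ℝ) / 4 ∧
            (normInf (b - x) : ℝ) ≤ (normInf x : ℝ) / 4 then
          max 2 (normInf a : ℝ) ^ (-(d : ℝ) - α) *
            max 2 (normInf (a - b) : ℝ) ^ (-(d : ℝ) - α) *
            max 2 (normInf (b - x) : ℝ) ^ (-(d : ℝ) - α) *
            min 1 (max 2 (normInf a : ℝ) / R) *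
            min 1 (max 2 (normInf (x - b) : ℝ) / R)
        else 0))
      ≤ C₁ * R ^ (-(2 * α)) * max 2 (normInf x : ℝ) ^ (-(d : ℝ) - α) := by
  obtain ⟨C₁, hC₁, hbound⟩ := convolution_estimate_general d hα0 hα1
  exact ⟨C₁, hC₁, fun R hR x _ => hbound R (one_pos.trans_le hR) x⟩

end LRP
end

section
/- (Averaged box-boundary counting bound.) Let d ≥ 1. There is a constant C₁ = C₁(d) < ∞ such that for every k ≥ 3 and all u, v ∈ ℤ^d: (1/|Λ_{k−3}|) Σ_{z ∈ Λ_{k−3}} 1(u ∈ z + Λ_{k−2} and v ∉ z + Λ_{k−2}) ≤ C₁ min{1, ⟨u−v⟩/2^k}, where 1(·) denotes the indicator function. -/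
open MeasureTheory ENNReal

namespace LRP

/-!
If `u` lies in the cube of radius `r` around `z` and `v` does not, then some coordinate `z i` lies
in the interval of radius `r` around `u i` but not in the one around `v i`. These intervals are
translates of each other by `v i - u i`, so at most `|u i - v i| ≤ ‖u - v‖` values of `z i` are
possible. Summing over `i`, such `z` make up a proportion of at most `d ‖u - v‖ / (2 N + 1)` of the
cube of radius `N` around the origin.
-/

section Counting

open Finset

lemma card_piFinset_update_mul_card {ι : Type*} [Fintype ι] [DecidableEq ι] {α : ι → Type*}
    (B : ∀ i, Finset (α i)) (i : ι) (S : Finset (α i)) :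
    #(Fintype.piFinset (Function.update B i S)) * #(B i) = #S * #(Fintype.piFinset B) := by
  have prod_compl_update :
      ∏ j ∈ {i}ᶜ, #(Function.update B i S j) = ∏ j ∈ {i}ᶜ, #(B j) :=
    prod_congr rfl fun j hj ↦ by rw [Function.update_of_ne (by simpa using hj)]
  rw [Fintype.card_piFinset, Fintype.card_piFinset, Fintype.prod_eq_mul_prod_compl i,
    Fintype.prod_eq_mul_prod_compl i (fun j ↦ #(B j)), prod_compl_update, Function.update_self]
  ring

lemma card_Icc_sdiff_Icc_le_natAbs_sub (a b r : ℤ) :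
    #(Icc (a - r) (a + r) \ Icc (b - r) (b + r)) ≤ (a - b).natAbs := by
  have sdiff_subset_ends : Icc (a - r) (a + r) \ Icc (b - r) (b + r) ⊆
      Ico (a - r) (b - r) ∪ Ioc (b + r) (a + r) := by
    intro t
    simp only [mem_sdiff, mem_union, mem_Icc, mem_Ico, mem_Ioc]
    omega
  calc #(Icc (a - r) (a + r) \ Icc (b - r) (b + r))
      ≤ #(Ico (a - r) (b - r)) + #(Ioc (b + r) (a + r)) :=
        (card_le_card sdiff_subset_ends).trans (card_union_le _ _)
    _ = (a - b).natAbs := by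
        rw [Int.card_Ico, Int.card_Ioc]
        omega

lemma card_Icc_neg_natCast (N : ℕ) : #(Icc (-N : ℤ) N) = 2 * N + 1 := by
  rw [Int.card_Icc]
  omega

end Counting

section SeparatingCenters

open Finset

variable {d : ℕ}

lemma normInf_le_iff {x : V d} {n : ℕ} : normInf x ≤ n ↔ ∀ i, (x i).natAbs ≤ n := by
  simp [normInf]

lemma lt_normInf_iff {x : V d} {n : ℕ} : n < normInf x ↔ ∃ i, n < (x i).natAbs := by
  simp [normInf, Finset.lt_sup_iff]

lemma natAbs_apply_le_normInf (x : V d) (i : Fin d) : (x i).natAbs ≤ normInf x :=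
  normInf_le_iff.1 le_rfl i

/-- The cube `[-N, N]^d` of lattice points, as a finset; the paper's `Λ_k` is `box d (2 ^ k)`. -/
noncomputable def box (d N : ℕ) : Finset (V d) := Fintype.piFinset fun _ ↦ Icc (-N : ℤ) N

lemma mem_box {N : ℕ} {z : V d} : z ∈ box d N ↔ normInf z ≤ N := by
  simp only [box, Fintype.mem_piFinset, mem_Icc, normInf_le_iff]
  exact forall_congr' fun i ↦ by omega

lemma card_box (d N : ℕ) : #(box d N) = (2 * N + 1) ^ d := by
  rw [box, Fintype.card_piFinset_const, card_Icc_neg_natCast]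

/-- The centers `z ∈ [-N, N]^d` for which the cube of radius `r` around `z` contains `u` but
not `v`; their proportion in `box d N` is the average to be bounded. -/
noncomputable def separatingCenters (N r : ℕ) (u v : V d) : Finset (V d) :=
  {z ∈ box d N | normInf (u - z) ≤ r ∧ r < normInf (v - z)}

lemma coe_separatingCenters (N r : ℕ) (u v : V d) :
    (separatingCenters N r u v : Set (V d)) =
      {z | normInf z ≤ N ∧ normInf (u - z) ≤ r ∧ r < normInf (v - z)} := by
  ext z
  simp [separatingCenters, mem_box]

lemma card_separatingCenters_le (N r : ℕ) (u v : V d) :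
    #(separatingCenters N r u v) ≤ (2 * N + 1) ^ d :=
  (card_le_card (filter_subset _ _)).trans_eq (card_box d N)

/-- The points whose `i`-th coordinate is within distance `r` of `u i` but not of `v i`, all other
coordinates being in `[-N, N]`; these slabs cover `separatingCenters N r u v`. The `i`-th coordinate
is not required to lie in `[-N, N]`. -/
noncomputable def slab (N r : ℕ) (u v : V d) (i : Fin d) : Finset (V d) :=
  Fintype.piFinset (Function.update (fun _ ↦ Icc (-N : ℤ) N) i
    (Icc (u i - r) (u i + r) \ Icc (v i - r) (v i + r)))

lemma separatingCenters_subset_biUnion_slab (N r : ℕ) (u v : V d) :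
    separatingCenters N r u v ⊆ univ.biUnion (slab N r u v) := by
  intro z hz
  obtain ⟨hzN, huz, hvz⟩ := mem_filter.1 hz
  obtain ⟨i, hi⟩ := lt_normInf_iff.1 hvz
  refine mem_biUnion.2 ⟨i, mem_univ i, Fintype.mem_piFinset.2 fun j ↦ ?_⟩
  obtain rfl | hji := eq_or_ne j i
  · have hj := normInf_le_iff.1 huz j
    rw [Function.update_self, mem_sdiff, mem_Icc, mem_Icc]
    rw [Pi.sub_apply] at hi hj
    omega
  · rw [Function.update_of_ne hji]
    exact Fintype.mem_piFinset.1 hzN j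

lemma card_slab_mul_le (N r : ℕ) (u v : V d) (i : Fin d) :
    #(slab N r u v i) * (2 * N + 1) ≤ normInf (u - v) * (2 * N + 1) ^ d := by
  rw [← card_box, ← card_Icc_neg_natCast, slab, card_piFinset_update_mul_card _ i, ← box]
  gcongr
  exact (card_Icc_sdiff_Icc_le_natAbs_sub _ _ _).trans (natAbs_apply_le_normInf (u - v) i)

lemma card_separatingCenters_mul_le (N r : ℕ) (u v : V d) :
    #(separatingCenters N r u v) * (2 * N + 1) ≤ d * normInf (u - v) * (2 * N + 1) ^ d :=
  calc #(separatingCenters N r u v) * (2 * N + 1)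
      ≤ (∑ i, #(slab N r u v i)) * (2 * N + 1) := by
        gcongr
        exact (card_le_card (separatingCenters_subset_biUnion_slab N r u v)).trans card_biUnion_le
    _ = ∑ i, #(slab N r u v i) * (2 * N + 1) := sum_mul _ _ _
    _ ≤ ∑ _i : Fin d, normInf (u - v) * (2 * N + 1) ^ d :=
        sum_le_sum fun i _ ↦ card_slab_mul_le N r u v i
    _ = d * normInf (u - v) * (2 * N + 1) ^ d := by
        rw [sum_const, card_univ, Fintype.card_fin, smul_eq_mul, mul_assoc]

lemma card_separatingCenters_div_le (N r : ℕ) (u v : V d) :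
    (#(separatingCenters N r u v) : ℝ) / (2 * N + 1) ^ d ≤
      min 1 (d * normInf (u - v) / (2 * N + 1) : ℝ) := by
  refine le_min ?_ ?_
  · rw [div_le_one (by positivity)]
    exact_mod_cast card_separatingCenters_le N r u v
  · rw [div_le_div_iff₀ (by positivity) (by positivity)]
    exact_mod_cast card_separatingCenters_mul_le N r u v

end SeparatingCenters

/-- Averaged box-boundary counting bound: for `k ≥ 3` and `u, v ∈ ℤ^d`,
`(1/|Λ_{k-3}|) Σ_{z ∈ Λ_{k-3}} 1(u ∈ z + Λ_{k-2}, v ∉ z + Λ_{k-2}) ≤ C₁ min{1, ⟨u-v⟩/2^k}`,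
where `|Λ_{k-3}| = (2^{k-2}+1)^d`. -/
theorem averaged_box_boundary_bound {d : ℕ} (hd : 1 ≤ d) :
    ∃ C₁ : ℝ, 0 < C₁ ∧ ∀ k : ℕ, 3 ≤ k → ∀ u v : V d,
      (Set.ncard {z : V d | normInf z ≤ 2 ^ (k - 3) ∧ normInf (u - z) ≤ 2 ^ (k - 2) ∧
          2 ^ (k - 2) < normInf (v - z)} : ℝ) / ((2 ^ (k - 2) + 1 : ℝ)) ^ d
      ≤ C₁ * min 1 (max 2 (normInf (u - v) : ℝ) / 2 ^ k) := by
  have one_le_d : (1 : ℝ) ≤ d := by exact_mod_cast hd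
  refine ⟨4 * d, by positivity, fun k hk u v ↦ ?_⟩
  obtain ⟨m, rfl⟩ := Nat.exists_eq_add_of_le' hk
  have side_eq : (2 : ℝ) ^ (m + 3 - 2) + 1 = 2 * (2 ^ m : ℕ) + 1 := by
    rw [show m + 3 - 2 = m + 1 by omega, pow_succ', Nat.cast_pow, Nat.cast_ofNat]
  rw [Nat.add_sub_cancel, ← coe_separatingCenters, Set.ncard_coe_finset, side_eq,
    mul_min_of_nonneg _ _ (by positivity)]
  refine (card_separatingCenters_div_le _ _ u v).trans (min_le_min ?one_le ?_)
  case one_le => linarith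
  calc (d * normInf (u - v) : ℝ) / (2 * (2 ^ m : ℕ) + 1)
      ≤ d * max 2 (normInf (u - v) : ℝ) / (2 * 2 ^ m) := by
        push_cast
        gcongr
        · exact le_max_right _ _
        · exact le_add_of_nonneg_right zero_le_one
    _ = 4 * d * (max 2 (normInf (u - v) : ℝ) / 2 ^ (m + 3)) := by
        field_simp
        ring

end LRP
end
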